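/- arXiv:1605.05190 — 2 statements merged into one kernel-verified Lean document; each statement's English description precedes it below -/
import Mathlib

section
/- Let 𝒜 be a C*-algebra. The partially ordered real Banach space 𝒜_sa of self-adjoint elements of 𝒜, endowed with its canonical order, is a lattice (i.e. every pair of elements of 𝒜_sa has a greatest lower bound in 𝒜_sa) if and only if the multiplication of 𝒜 is commutative. -/
/-!
`selfAdjoint A` is a lattice if and only if the positive part `x⁺` of the continuous functional
calculus is the supremum of `x` and `0` for every self-adjoint `x`: if `s` is that supremum, then
`x⁺ - s` lies below the orthogonal positive elements `x⁺` and `x⁻`, and so it is `0`.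

Suppose that positive parts are suprema. If `u * star v = 0`, then `±(star u * v + star v * u)`
are at most `ε • (star u * u) + ε⁻¹ • (star v * v)` for every `ε > 0`, and so are their positive
parts. As the two summands are orthogonal, letting `ε → 0` and `ε → ∞` kills the positive parts.
Taking `u = y` and `v = y * star y` shows that `y * y = 0` forces `y = 0`. Now cut a positive `h`
at half its norm. The two pieces have norm at most `‖h‖ / 2`, and in the absence of square-zero
elements the squares of the two inner derivations add up to that of `h`. This halves any constant
`C` with `‖⁅h, ⁅h, x⁆⁆‖ ≤ C * ‖h‖ ^ 2`, so the double commutator vanishes, and the Leibniz rule for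
`⁅h, ⁅h, x * x⁆⁆` yields `⁅h, x⁆ * ⁅h, x⁆ = 0`.

Conversely, let `y ≥ 0` commute with `x ≤ y`, and put `n = (y - x⁺)⁻`. Then `n * n * n` lies below
the positive elements `n * x⁺ * n` and `n * x⁻ * n`, which are orthogonal, and so `n = 0`.
-/

section OrderedGroup

variable {G : Type*} [AddCommGroup G] [PartialOrder G] [IsOrderedAddMonoid G]

lemma isGLB_pair_sub_iff_isLUB {a b s : G} :
    IsGLB {a, b} (a - s) ↔ IsLUB {a - b, 0} s := by
  simp only [isGLB_iff_le_iff, isLUB_iff_le_iff, lowerBounds_insert, upperBounds_insert,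
    lowerBounds_singleton, upperBounds_singleton, Set.mem_inter_iff, Set.mem_Iic, Set.mem_Ici]
  refine ((Equiv.subLeft a).forall_congr fun y => ?_).symm
  rw [Equiv.subLeft_apply, sub_le_sub_iff_left, sub_le_self_iff, sub_le_comm, and_comm]

end OrderedGroup

section StarOrderedRing

variable {R : Type*} [NonUnitalRing R] [PartialOrder R] [StarRing R] [StarOrderedRing R]

lemma isGLB_pair_coe_selfAdjoint_iff {a b c : selfAdjoint R} :
    IsGLB {(a : R), (b : R)} (c : R) ↔ IsGLB {a, b} c := by
  simp only [isGLB_iff_le_iff, lowerBounds_insert, lowerBounds_singleton, Set.mem_inter_iff,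
    Set.mem_Iic]
  refine ⟨fun h d => h d, fun h d => ⟨fun hd => ?_, fun hd => ?_⟩⟩
  · exact (h ⟨d, (IsSelfAdjoint.iff_of_le hd).mpr c.2⟩).mp hd
  · exact (h ⟨d, (IsSelfAdjoint.iff_of_le hd.1).mpr a.2⟩).mpr hd

end StarOrderedRing

section Commutator

variable {R : Type*} [NonUnitalRing R]

lemma lie_lie_mul (h x y : R) :
    ⁅h, ⁅h, x * y⁆⁆ = ⁅h, ⁅h, x⁆⁆ * y + 2 • (⁅h, x⁆ * ⁅h, y⁆) + x * ⁅h, ⁅h, y⁆⁆ := by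
  simp only [Ring.lie_def, mul_sub, sub_mul, mul_assoc]
  abel

lemma mul_eq_mul_of_forall_lie_lie_eq_zero [IsAddTorsionFree R]
    (hred : ∀ y : R, y * y = 0 → y = 0) {h : R}
    (hlie : ∀ x : R, ⁅h, ⁅h, x⁆⁆ = 0) (x : R) : h * x = x * h := by
  have hsq : 2 • (⁅h, x⁆ * ⁅h, x⁆) = 0 := by
    simpa only [hlie, zero_mul, mul_zero, zero_add, add_zero] using (lie_lie_mul h x x).symm
  exact sub_eq_zero.mp (hred _ ((nsmul_eq_zero_iff_right two_ne_zero).mp hsq))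

variable {K : Type*} [Monoid K] [DistribMulAction K R] [IsScalarTower K R R] [SMulCommClass K R R]

lemma mul_mul_eq_smul_of_mul_eq_smul_right (hred : ∀ y : R, y * y = 0 → y = 0) {a b : R} {t : K}
    (hab : a * b = t • b) (x : R) : b * x * a = t • (b * x) := by
  have hzero : (b * x * a - t • (b * x)) * b = 0 := by
    rw [sub_mul, mul_assoc, hab, mul_smul_comm, smul_mul_assoc, sub_self]
  refine sub_eq_zero.mp (hred _ ?_)
  rw [mul_sub, mul_smul_comm, ← mul_assoc, ← mul_assoc, hzero, zero_mul, zero_mul, smul_zero,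
    sub_self]

lemma mul_mul_eq_smul_of_mul_eq_smul_left (hred : ∀ y : R, y * y = 0 → y = 0) {a b : R} {t : K}
    (hba : b * a = t • b) (x : R) : a * x * b = t • (x * b) := by
  have hzero : b * (a * x * b - t • (x * b)) = 0 := by
    rw [mul_sub, mul_smul_comm, ← mul_assoc, ← mul_assoc, hba, smul_mul_assoc, smul_mul_assoc,
      mul_assoc, sub_self]
  refine sub_eq_zero.mp (hred _ ?_)
  rw [sub_mul, smul_mul_assoc, mul_assoc (a * x), mul_assoc x, hzero, mul_zero, mul_zero, smul_zero,
    sub_self]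

-- In a unital algebra the hypotheses say `(a - t) * b = b * (a - t) = 0`; without square-zero
-- elements, `(a - t) * x * b` and `b * x * (a - t)` then vanish, and so do the cross terms.
lemma lie_lie_add_of_mul_eq_smul (hred : ∀ y : R, y * y = 0 → y = 0) {a b : R} {t : K}
    (hab : a * b = t • b) (hba : b * a = t • b) (x : R) :
    ⁅a + b, ⁅a + b, x⁆⁆ = ⁅a, ⁅a, x⁆⁆ + ⁅b, ⁅b, x⁆⁆ := by
  have hcross : ⁅a, ⁅b, x⁆⁆ = 0 ∧ ⁅b, ⁅a, x⁆⁆ = 0 := by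
    simp only [Ring.lie_def, mul_sub, sub_mul, ← mul_assoc]
    simp only [hab, hba, mul_assoc x, smul_mul_assoc, mul_smul_comm,
      mul_mul_eq_smul_of_mul_eq_smul_right hred hab, mul_mul_eq_smul_of_mul_eq_smul_left hred hba]
    constructor <;> abel
  have lie_add (y z w : R) : ⁅y, z + w⁆ = ⁅y, z⁆ + ⁅y, w⁆ := by
    simp only [Ring.lie_def, mul_add, add_mul]
    abel
  have add_lie (y z w : R) : ⁅y + z, w⁆ = ⁅y, w⁆ + ⁅z, w⁆ := by
    simp only [Ring.lie_def, mul_add, add_mul]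
    abel
  rw [add_lie a b x, lie_add, add_lie, add_lie, hcross.1, hcross.2, add_zero, zero_add]

end Commutator

section NormedRing

variable {R : Type*} [NonUnitalSeminormedRing R]

lemma norm_lie_le_two_mul (x y : R) : ‖⁅x, y⁆‖ ≤ 2 * ‖x‖ * ‖y‖ := by
  rw [Ring.lie_def]
  linarith [norm_sub_le (x * y) (y * x), norm_mul_le x y, norm_mul_le y x, mul_comm ‖y‖ ‖x‖]

lemma norm_lie_lie_le (h x : R) : ‖⁅h, ⁅h, x⁆⁆‖ ≤ 4 * ‖x‖ * ‖h‖ ^ 2 :=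
  calc ‖⁅h, ⁅h, x⁆⁆‖ ≤ 2 * ‖h‖ * ‖⁅h, x⁆‖ := norm_lie_le_two_mul _ _
    _ ≤ 2 * ‖h‖ * (2 * ‖h‖ * ‖x‖) := by gcongr; exact norm_lie_le_two_mul h x
    _ = 4 * ‖x‖ * ‖h‖ ^ 2 := by ring

end NormedRing

section CStarAlgebra

variable {A : Type*} [NonUnitalCStarAlgebra A]

/-- The part `h ∧ t` of `h` below height `t`, by functional calculus; meaningful for `0 ≤ t`. -/
noncomputable def cutBelow (t : ℝ) (h : A) : A := cfcₙ (fun s => min s t) h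

/-- The part `(h - t)⁺` of `h` above height `t`, by functional calculus; meaningful for `0 ≤ t`.
The scalar is subtracted inside the functional calculus because `A` need not have a unit. -/
noncomputable def cutAbove (t : ℝ) (h : A) : A := cfcₙ (fun s => max (s - t) 0) h

lemma cutBelow_add_cutAbove {t : ℝ} (ht : 0 ≤ t) {h : A} (hh : IsSelfAdjoint h) :
    cutBelow t h + cutAbove t h = h := by
  have hsum : (fun s => min s t + max (s - t) 0) = fun s => s := by
    ext s
    rcases le_total s t with hst | hst <;> simp [hst]
  rw [cutBelow, cutAbove, ← cfcₙ_add .., hsum, cfcₙ_id' ℝ h]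

lemma cutBelow_mul_cutAbove {t : ℝ} (ht : 0 ≤ t) (h : A) :
    cutBelow t h * cutAbove t h = t • cutAbove t h := by
  have hmul : (fun s => min s t * max (s - t) 0) = fun s => t • max (s - t) 0 := by
    ext s
    rcases le_total s t with hst | hst <;> simp [hst]
  rw [cutBelow, cutAbove, ← cfcₙ_mul .., hmul, cfcₙ_smul ..]

lemma cutAbove_mul_cutBelow {t : ℝ} (ht : 0 ≤ t) (h : A) :
    cutAbove t h * cutBelow t h = t • cutAbove t h :=
  (cfcₙ_commute_cfcₙ _ _ h).eq.trans (cutBelow_mul_cutAbove ht h)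

lemma norm_cutAbove_le {t : ℝ} {h : A} (ht : t ≤ ‖h‖) (hh : IsSelfAdjoint h) :
    ‖cutAbove t h‖ ≤ ‖h‖ - t :=
  norm_cfcₙ_le fun s hs => by
    have hs_le : s ≤ ‖h‖ := (le_abs_self s).trans
      (NonUnitalIsometricContinuousFunctionalCalculus.norm_quasispectrum_le h hs hh)
    rw [Real.norm_of_nonneg (le_max_right _ _)]
    exact max_le (sub_le_sub_right hs_le t) (sub_nonneg.mpr ht)

variable [PartialOrder A] [StarOrderedRing A]

lemma cutBelow_nonneg {t : ℝ} (ht : 0 ≤ t) {h : A} (hh : 0 ≤ h) : 0 ≤ cutBelow t h :=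
  cfcₙ_nonneg fun s hs => le_min (quasispectrum_nonneg_of_nonneg h hh s hs) ht

lemma cutAbove_nonneg (t : ℝ) (h : A) : 0 ≤ cutAbove t h :=
  cfcₙ_nonneg fun _ _ => le_max_right _ _

lemma norm_cutBelow_le {t : ℝ} (ht : 0 ≤ t) {h : A} (hh : 0 ≤ h) : ‖cutBelow t h‖ ≤ t :=
  norm_cfcₙ_le fun s hs => by
    rw [Real.norm_of_nonneg (le_min (quasispectrum_nonneg_of_nonneg h hh s hs) ht)]
    exact min_le_right s t

lemma norm_lie_lie_le_half_mul (hred : ∀ y : A, y * y = 0 → y = 0) {x : A} {C : ℝ} (hC : 0 ≤ C)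
    (hbound : ∀ h : A, 0 ≤ h → ‖⁅h, ⁅h, x⁆⁆‖ ≤ C * ‖h‖ ^ 2) {h : A} (hh : 0 ≤ h) :
    ‖⁅h, ⁅h, x⁆⁆‖ ≤ C / 2 * ‖h‖ ^ 2 := by
  have hsa := IsSelfAdjoint.of_nonneg hh
  set t := ‖h‖ / 2 with ht_def
  have ht : 0 ≤ t := by positivity
  set a := cutBelow t h
  set b := cutAbove t h
  have ha : ‖a‖ ≤ t := norm_cutBelow_le ht hh
  have hb : ‖b‖ ≤ t :=
    (norm_cutAbove_le (half_le_self (norm_nonneg h)) hsa).trans_eq (sub_half ‖h‖)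
  calc ‖⁅h, ⁅h, x⁆⁆‖ = ‖⁅a, ⁅a, x⁆⁆ + ⁅b, ⁅b, x⁆⁆‖ := by
        rw [← lie_lie_add_of_mul_eq_smul hred (cutBelow_mul_cutAbove ht h)
          (cutAbove_mul_cutBelow ht h), cutBelow_add_cutAbove ht hsa]
    _ ≤ C * ‖a‖ ^ 2 + C * ‖b‖ ^ 2 := norm_add_le_of_le
        (hbound a (cutBelow_nonneg ht hh)) (hbound b (cutAbove_nonneg t h))
    _ ≤ C * t ^ 2 + C * t ^ 2 := by gcongr
    _ = C / 2 * ‖h‖ ^ 2 := by rw [ht_def]; ring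

lemma lie_lie_eq_zero_of_nonneg (hred : ∀ y : A, y * y = 0 → y = 0) {h : A} (hh : 0 ≤ h) (x : A) :
    ⁅h, ⁅h, x⁆⁆ = 0 := by
  have hbound (n : ℕ) : ∀ h : A, 0 ≤ h → ‖⁅h, ⁅h, x⁆⁆‖ ≤ 4 * ‖x‖ / 2 ^ n * ‖h‖ ^ 2 := by
    induction n with
    | zero => simpa using fun h _ => norm_lie_lie_le h x
    | succ n ih =>
      intro h hh
      rw [pow_succ, ← div_div]
      exact norm_lie_lie_le_half_mul hred (by positivity) ih hh
  have hlim : Filter.Tendsto (fun n : ℕ => 4 * ‖x‖ / 2 ^ n * ‖h‖ ^ 2) Filter.atTop (nhds 0) := by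
    simpa [div_eq_mul_inv] using ((tendsto_pow_atTop_nhds_zero_of_lt_one (r := (2⁻¹ : ℝ))
      (by norm_num) (by norm_num)).const_mul (4 * ‖x‖)).mul_const (‖h‖ ^ 2)
  exact norm_le_zero_iff.mp (ge_of_tendsto' hlim fun n => hbound n h hh)

lemma mul_comm_of_forall_mul_self_eq_zero (hred : ∀ y : A, y * y = 0 → y = 0) (a b : A) :
    a * b = b * a := by
  have : IsAddTorsionFree A := .of_isTorsionFree ℂ A
  have ha : a ∈ Submodule.span ℂ {h : A | 0 ≤ h} := by
    rw [CStarAlgebra.span_nonneg]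
    exact Submodule.mem_top
  induction ha using Submodule.span_induction with
  | mem h hh =>
    exact mul_eq_mul_of_forall_lie_lie_eq_zero hred (lie_lie_eq_zero_of_nonneg hred hh) b
  | zero => rw [zero_mul, mul_zero]
  | add y z _ _ hy hz => rw [add_mul, mul_add, hy, hz]
  | smul c y _ hy => rw [smul_mul_assoc, mul_smul_comm, hy]

lemma mul_eq_zero_of_star_mul_mul_eq_zero {a c : A} (hc : 0 ≤ c) (h : star a * c * a = 0) :
    c * a = 0 := by
  obtain ⟨s, rfl⟩ := CStarAlgebra.nonneg_iff_eq_star_mul_self.mp hc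
  have hsa : s * a = 0 := by
    rw [← CStarRing.star_mul_self_eq_zero_iff, star_mul, ← h]
    simp only [mul_assoc]
  rw [mul_assoc, hsa, mul_zero]

lemma mul_eq_zero_of_conjugate_nonpos {a c : A} (hc : 0 ≤ c) (ha : 0 ≤ a) (h : a * c * a ≤ 0) :
    c * a = 0 := by
  refine mul_eq_zero_of_star_mul_mul_eq_zero hc ?_
  rw [ha.star_eq]
  exact h.antisymm (conjugate_nonneg_of_nonneg hc ha)

lemma eq_zero_of_mul_mul_self_nonpos {c : A} (hc : 0 ≤ c) (h : c * c * c ≤ 0) : c = 0 := by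
  rw [← CStarRing.star_mul_self_eq_zero_iff, hc.star_eq]
  exact mul_eq_zero_of_conjugate_nonpos hc hc h

lemma eq_zero_of_le_of_le_of_mul_eq_zero {d p q : A} (hd : 0 ≤ d) (hdp : d ≤ p) (hdq : d ≤ q)
    (hpq : p * q = 0) : d = 0 := by
  have hdq_zero : d * q = 0 := by
    refine mul_eq_zero_of_conjugate_nonpos hd (hd.trans hdq) ?_
    calc q * d * q ≤ q * p * q := conjugate_le_conjugate_of_nonneg hdp (hd.trans hdq)
      _ = 0 := by rw [mul_assoc, hpq, mul_zero]
  refine eq_zero_of_mul_mul_self_nonpos hd ?_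
  calc d * d * d ≤ d * q * d := conjugate_le_conjugate_of_nonneg hdq hd
    _ = 0 := by rw [hdq_zero, zero_mul]

lemma mul_eq_zero_of_forall_le_smul_add_inv_smul {c p q : A} (hc : 0 ≤ c) (hp : 0 ≤ p)
    (hpq : p * q = 0) (h : ∀ ε : ℝ, 0 < ε → c ≤ ε • p + ε⁻¹ • q) : c * p = 0 := by
  refine mul_eq_zero_of_conjugate_nonpos hc hp ?_
  have hbound (ε : ℝ) (hε : 0 < ε) : p * c * p ≤ ε • (p * p * p) :=
    calc p * c * p ≤ p * (ε • p + ε⁻¹ • q) * p := conjugate_le_conjugate_of_nonneg (h ε hε) hp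
      _ = ε • (p * p * p) := by
        rw [mul_add, mul_smul_comm, mul_smul_comm, hpq, smul_zero, add_zero, smul_mul_assoc]
  have hlim : Filter.Tendsto (fun ε : ℝ => ε • (p * p * p)) (nhdsWithin 0 (Set.Ioi 0)) (nhds 0) :=
    tendsto_nhdsWithin_of_tendsto_nhds <|
      (continuous_id.smul continuous_const).tendsto' 0 0 (zero_smul ℝ _)
  exact ge_of_tendsto hlim (Filter.eventually_of_mem self_mem_nhdsWithin hbound)

lemma eq_zero_of_forall_le_smul_add_inv_smul {c p q : A} (hc : 0 ≤ c) (hp : 0 ≤ p) (hq : 0 ≤ q)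
    (hpq : p * q = 0) (h : ∀ ε : ℝ, 0 < ε → c ≤ ε • p + ε⁻¹ • q) : c = 0 := by
  have hqp : q * p = 0 := by simpa [hp.star_eq, hq.star_eq] using congr(star $hpq)
  have hcp : c * p = 0 := mul_eq_zero_of_forall_le_smul_add_inv_smul hc hp hpq h
  have hcq : c * q = 0 := mul_eq_zero_of_forall_le_smul_add_inv_smul hc hq hqp fun ε hε => by
    simpa [add_comm] using h ε⁻¹ (inv_pos.mpr hε)
  refine eq_zero_of_mul_mul_self_nonpos hc ?_
  calc c * c * c ≤ c * (p + q) * c :=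
        conjugate_le_conjugate_of_nonneg (by simpa using h 1 one_pos) hc
    _ = 0 := by rw [mul_add, hcp, hcq, add_zero, zero_mul]

lemma star_mul_add_star_mul_le (u v : A) {ε : ℝ} (hε : 0 < ε) :
    star u * v + star v * u ≤ ε • (star u * u) + ε⁻¹ • (star v * v) := by
  have hexpand : ε⁻¹ • (star (ε • u - v) * (ε • u - v)) =
      ε • (star u * u) + ε⁻¹ • (star v * v) - (star u * v + star v * u) := by
    simp only [star_sub, star_smul, star_trivial, mul_sub, sub_mul, smul_mul_assoc, mul_smul_comm,
      smul_sub, inv_smul_smul₀ hε.ne']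
    abel
  rw [← sub_nonneg, ← hexpand]
  exact smul_nonneg (inv_nonneg.mpr hε.le) (star_mul_self_nonneg _)

lemma star_mul_add_star_mul_nonpos (hsup : ∀ x : A, IsSelfAdjoint x → IsLUB {x, 0} x⁺) {u v : A}
    (huv : u * star v = 0) : star u * v + star v * u ≤ 0 := by
  set x := star u * v + star v * u with hx_def
  have hx : IsSelfAdjoint x := by simp [IsSelfAdjoint, hx_def, add_comm]
  have horth : star u * u * (star v * v) = 0 := by
    rw [mul_assoc, ← mul_assoc u, huv, zero_mul, mul_zero]
  have hpos : x⁺ = 0 := by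
    refine eq_zero_of_forall_le_smul_add_inv_smul (CFC.posPart_nonneg x) (star_mul_self_nonneg u)
      (star_mul_self_nonneg v) horth fun ε hε => (isLUB_le_iff (hsup x hx)).mpr ?_
    rintro _ (rfl | rfl)
    · exact star_mul_add_star_mul_le u v hε
    · have := star_mul_self_nonneg u
      have := star_mul_self_nonneg v
      positivity
  exact (CFC.le_posPart hx).trans_eq hpos

lemma eq_zero_of_mul_self_eq_zero_of_isLUB_posPart
    (hsup : ∀ x : A, IsSelfAdjoint x → IsLUB {x, 0} x⁺) {y : A} (hy : y * y = 0) : y = 0 := by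
  set b := y * star y with hb_def
  have hb : star b = b := by simp [hb_def]
  have hyb : y * b = 0 := by rw [hb_def, ← mul_assoc, hy, zero_mul]
  have hsum : star y * b + star b * y = 0 := by
    refine (star_mul_add_star_mul_nonpos hsup (by rwa [hb])).antisymm ?_
    have hneg := star_mul_add_star_mul_nonpos hsup (u := -y) (v := b)
      (by rw [hb, neg_mul, hyb, neg_zero])
    rwa [star_neg, neg_mul, mul_neg, ← neg_add, neg_nonpos] at hneg
  have hbb : star b * b = 0 :=
    calc star b * b = y * (star y * b + star b * y) := by
          rw [hb, mul_add, ← mul_assoc y b, hyb, zero_mul, add_zero, ← mul_assoc y (star y),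
            ← hb_def]
      _ = 0 := by rw [hsum, mul_zero]
  exact (CStarRing.mul_star_self_eq_zero_iff y).mp ((CStarRing.star_mul_self_eq_zero_iff b).mp hbb)

lemma posPart_eq_of_isLUB {x s : A} (hx : IsSelfAdjoint x) (hs : IsLUB {x, 0} s) : x⁺ = s := by
  have hxs : x ≤ s := hs.1 (by simp)
  have h0s : 0 ≤ s := hs.1 (by simp)
  have hle : s ≤ x⁺ := (isLUB_le_iff hs).mpr <| by
    rintro _ (rfl | rfl)
    exacts [CFC.le_posPart hx, CFC.posPart_nonneg x]
  refine sub_eq_zero.mp (eq_zero_of_le_of_le_of_mul_eq_zero (sub_nonneg.mpr hle)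
    (sub_le_self _ h0s) ?_ (CFC.posPart_mul_negPart x))
  calc x⁺ - s ≤ x⁺ - x := sub_le_sub_left hxs _
    _ = x⁻ := sub_eq_iff_eq_add'.mpr (sub_eq_iff_eq_add.mp (CFC.posPart_sub_negPart x hx))

lemma posPart_le_of_commute {x y : A} (hx : IsSelfAdjoint x) (hcomm : Commute x y) (hy : 0 ≤ y)
    (hxy : x ≤ y) : x⁺ ≤ y := by
  set p := x⁺
  set q := x⁻
  set z := y - p with hz_def
  set n := z⁻
  have hp0 : 0 ≤ p := CFC.posPart_nonneg x
  have hn0 : 0 ≤ n := CFC.negPart_nonneg z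
  have hz : IsSelfAdjoint z := (IsSelfAdjoint.of_nonneg hy).sub (.of_nonneg hp0)
  have hpq : p * q = 0 := CFC.posPart_mul_negPart x
  have hnp : Commute n p :=
    ((hcomm.cfcₙ_real _).symm.sub_left (Commute.refl p)).cfcₙ_real _
  have hnq : Commute n q :=
    ((hcomm.cfcₙ_real _).symm.sub_left (cfcₙ_commute_cfcₙ _ _ x)).cfcₙ_real _
  have hnzn : n * z * n = -(n * n * n) := by
    nth_rw 1 [← CFC.posPart_sub_negPart z hz]
    rw [mul_sub, CFC.negPart_mul_posPart, zero_sub, neg_mul]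
  have hcube (r : A) (hr : -r ≤ z) : n * n * n ≤ n * r * n := by
    have h := conjugate_le_conjugate_of_nonneg hr hn0
    rwa [hnzn, mul_neg, neg_mul, neg_le_neg_iff] at h
  have horth : n * p * n * (n * q * n) = 0 := by
    calc n * p * n * (n * q * n) = n * n * (p * q) * n * n := by
          rw [mul_assoc n p n, ← hnp.eq, hnq.eq]; simp only [mul_assoc]
      _ = 0 := by simp only [hpq, mul_zero, zero_mul]
  have hn : n = 0 := by
    refine eq_zero_of_mul_mul_self_nonpos hn0 (eq_zero_of_le_of_le_of_mul_eq_zero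
      (conjugate_nonneg_of_nonneg hn0 hn0) (hcube p ?_) (hcube q ?_) horth).le
    · simpa [hz_def] using hy
    · rw [hz_def, neg_le_sub_iff_le_add, ← sub_le_iff_le_add, CFC.posPart_sub_negPart x hx]
      exact hxy
  exact sub_nonneg.mp ((CFC.negPart_eq_zero_iff z hz).mp hn)

lemma forall_exists_isGLB_iff_forall_isLUB_posPart :
    (∀ a b : selfAdjoint A, ∃ c, IsGLB {a, b} c) ↔
      ∀ x : A, IsSelfAdjoint x → IsLUB {x, 0} x⁺ := by
  constructor
  · intro hlat x hx
    obtain ⟨c, hc⟩ := hlat 0 ⟨-x, hx.neg⟩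
    have hsup : IsLUB {x, 0} (-c : A) := by
      simpa using (isGLB_pair_sub_iff_isLUB (a := (0 : A)) (b := -x) (s := -c)).mp
        (by simpa using isGLB_pair_coe_selfAdjoint_iff.mpr hc)
    rwa [posPart_eq_of_isLUB hx hsup]
  · intro hsup a b
    exact ⟨a - ⟨(a - b : A)⁺, .of_nonneg (CFC.posPart_nonneg _)⟩,
      isGLB_pair_coe_selfAdjoint_iff.mp (isGLB_pair_sub_iff_isLUB.mpr (hsup _ (a.2.sub b.2)))⟩

end CStarAlgebra

/-- **Sherman's theorem.** For a C*-algebra `A` (not necessarily unital), endowed with its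
canonical order (`b - a` positive iff `a ≤ b`, encoded by the `StarOrderedRing` instance),
the self-adjoint part `selfAdjoint A` is a lattice (every pair of elements has a greatest
lower bound) if and only if the multiplication of `A` is commutative. -/
theorem sherman_lattice_iff_commutative
    {A : Type*} [NonUnitalCStarAlgebra A] [PartialOrder A] [StarOrderedRing A] :
    (∀ a b : selfAdjoint A, ∃ c : selfAdjoint A, IsGLB ({a, b} : Set (selfAdjoint A)) c) ↔
      (∀ a b : A, a * b = b * a) := by
  rw [forall_exists_isGLB_iff_forall_isLUB_posPart]
  constructor
  · intro hsup
    exact mul_comm_of_forall_mul_self_eq_zero fun _ =>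
      eq_zero_of_mul_self_eq_zero_of_isLUB_posPart hsup
  · intro hcomm x hx
    refine ⟨?_, fun y hy => ?_⟩
    · rintro _ (rfl | rfl)
      exacts [CFC.le_posPart hx, CFC.posPart_nonneg x]
    · exact posPart_le_of_commute hx (hcomm x y) (hy (by simp)) (hy (by simp))
end

section
/- Let 𝒜 be a C*-algebra such that the partially ordered space 𝒜_sa of self-adjoint elements, endowed with its canonical order, is a lattice (every pair of elements has a greatest lower bound). Then 𝒜 is commutative. -/
/-!
In a vector lattice every `0 ≤ c ≤ a + b` splits as `c = c₁ + c₂` with `0 ≤ c₁ ≤ a` and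
`0 ≤ c₂ ≤ b`. In a C⋆-algebra an inequality `0 ≤ c₁ ≤ a` makes every annihilator of `a` an
annihilator of `c₁`, so the splitting gives `e * c * f = 0` whenever `e * b = 0` and `a * f = 0`.
If `x * x = 0`, then `c = (x⋆x + x)(x⋆x + x)⋆` lies below `2(x⋆x)² + 2xx⋆`, and `e = f = x` yields
`x * c * x = x(x⋆x)² = 0`, hence `x = 0`: the algebra is reduced.

A reduced C⋆-algebra is commutative: cut `a ≥ 0` at height `‖a‖ / 2` into a lower part `h` and an
upper part `k`, so that `h` acts on `k` as the scalar `‖a‖ / 2`. Reducedness propagates this to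
`h * w * k = (‖a‖ / 2) • (w * k)` for every `w`, so the commutators of `h` and `k` with `y` are
orthogonal and the norm of their sum `⁅a, y⁆` is the larger of their norms. Each cut thus halves
the bound on the commutator.
-/

section RieszDecomposition

/-- The Riesz decomposition property of an ordered group: a positive element below a sum of two
positive elements is a sum of positive elements below each of them. This is the weakening of the
lattice property that already forces a C⋆-algebra to be commutative. -/
def HasRieszDecomposition (G : Type*) [AddZeroClass G] [LE G] : Prop :=
  ∀ ⦃a b c : G⦄, 0 ≤ a → 0 ≤ b → 0 ≤ c → c ≤ a + b →
    ∃ c₁ c₂ : G, (0 ≤ c₁ ∧ c₁ ≤ a) ∧ (0 ≤ c₂ ∧ c₂ ≤ b) ∧ c₁ + c₂ = c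

lemma hasRieszDecomposition_of_exists_isGLB {G : Type*} [AddCommGroup G] [PartialOrder G]
    [IsOrderedAddMonoid G] (hglb : ∀ a b : G, ∃ c, IsGLB {a, b} c) :
    HasRieszDecomposition G := by
  intro a b c ha hb hc hcab
  obtain ⟨m, hm⟩ := hglb c a
  have le_m {w : G} (hwc : w ≤ c) (hwa : w ≤ a) : w ≤ m := hm.2 (by simp [hwc, hwa])
  have hmc : m ≤ c := hm.1 (by simp)
  have hma : m ≤ a := hm.1 (by simp)
  have hcbm : c - b ≤ m := le_m (sub_le_self c hb) (sub_le_iff_le_add.mpr hcab)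
  exact ⟨m, c - m, ⟨le_m hc ha, hma⟩, ⟨sub_nonneg.mpr hmc, sub_le_comm.mp hcbm⟩,
    add_sub_cancel m c⟩

end RieszDecomposition

section Reduced

lemma mul_mul_eq_zero_of_forall_mul_self_eq_zero {S : Type*} [SemigroupWithZero S]
    (hred : ∀ x : S, x * x = 0 → x = 0) {a b : S} (hab : a * b = 0) (y : S) : a * y * b = 0 := by
  have hba : b * a = 0 := hred _ (by rw [mul_assoc, ← mul_assoc a, hab, zero_mul, mul_zero])
  exact hred _ (by rw [mul_assoc, ← mul_assoc b, ← mul_assoc b, hba, zero_mul, zero_mul, mul_zero])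

variable {R A : Type*} [NonUnitalRing A] [Monoid R] [DistribMulAction R A] [IsScalarTower R A A]
  [SMulCommClass R A A]

lemma mul_mul_eq_smul_mul_of_mul_eq_smul (hred : ∀ x : A, x * x = 0 → x = 0) {h k : A} {s : R}
    (hk : h * k = s • k) (w : A) : h * w * k = s • (w * k) := by
  -- `h - s` is not available in `A`, so it is multiplied on the left by `x`, which is arbitrary.
  have annihilates (x : A) : (x * h - s • x) * w * k = 0 :=
    mul_mul_eq_zero_of_forall_mul_self_eq_zero hred
      (by rw [sub_mul, mul_assoc, hk, smul_mul_assoc, mul_smul_comm, sub_self]) w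
  refine sub_eq_zero.mp (hred _ ?_)
  simpa only [sub_mul, mul_sub, smul_mul_assoc, mul_smul_comm, mul_assoc] using
    annihilates (h * w * k - s • (w * k))

lemma lie_mul_lie_eq_zero_of_mul_eq_smul (hred : ∀ x : A, x * x = 0 → x = 0) {h k : A} {s : R}
    (hk : h * k = s • k) (y z : A) : ⁅h, y⁆ * ⁅k, z⁆ = 0 := by
  have scalar := mul_mul_eq_smul_mul_of_mul_eq_smul hred hk
  calc ⁅h, y⁆ * ⁅k, z⁆
      = h * y * k * z - h * (y * z) * k - y * (h * k) * z + y * (h * z * k) := by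
        simp only [Ring.lie_def]; noncomm_ring
    _ = 0 := by
        rw [scalar, scalar, scalar, hk]
        simp only [smul_mul_assoc, mul_smul_comm, mul_assoc]
        abel

end Reduced

section CStarAlgebra

variable {A : Type*} [NonUnitalCStarAlgebra A]

lemma norm_add_eq_max_of_orthogonal {x y : A} (hxy : star x * y = 0) (hxy' : x * star y = 0) :
    ‖x + y‖ = max ‖x‖ ‖y‖ := by
  have hyx : star y * x = 0 := by simpa using congr(star $hxy)
  have horth : star x * x * (star y * y) = 0 := by
    rw [mul_assoc, ← mul_assoc x, hxy', zero_mul, mul_zero]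
  have hsq : ‖x + y‖ ^ 2 = max ‖x‖ ‖y‖ ^ 2 := calc
    ‖x + y‖ ^ 2 = ‖star x * x + star y * y‖ := by
      rw [sq, ← CStarRing.norm_star_mul_self, star_add, add_mul, mul_add, mul_add, hxy, hyx,
        add_zero, zero_add]
    _ = max (‖x‖ ^ 2) (‖y‖ ^ 2) := by
      rw [(IsSelfAdjoint.star_mul_self x).norm_add_eq_max (.star_mul_self y) horth,
        CStarRing.norm_star_mul_self, CStarRing.norm_star_mul_self, sq, sq]
    _ = max ‖x‖ ‖y‖ ^ 2 := by
      rcases le_total ‖x‖ ‖y‖ with h | h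
      · rw [max_eq_right h, max_eq_right (by gcongr)]
      · rw [max_eq_left h, max_eq_left (by gcongr)]
  exact (sq_eq_sq₀ (norm_nonneg _) (by positivity)).mp hsq

lemma norm_add_lie_eq_max_of_mul_eq_smul (hred : ∀ x : A, x * x = 0 → x = 0) {h k : A} {s : ℝ}
    (hh : IsSelfAdjoint h) (hk : IsSelfAdjoint k) (hhk : h * k = s • k) (y : A) :
    ‖⁅h + k, y⁆‖ = max ‖⁅h, y⁆‖ ‖⁅k, y⁆‖ := by
  have star_lie {x : A} (hx : IsSelfAdjoint x) : star ⁅x, y⁆ = -⁅x, star y⁆ := by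
    simp [Ring.lie_def, hx.star_eq]
  have orthogonal := lie_mul_lie_eq_zero_of_mul_eq_smul hred hhk
  have hadd : ⁅h + k, y⁆ = ⁅h, y⁆ + ⁅k, y⁆ := by
    simp only [Ring.lie_def]; noncomm_ring
  rw [hadd, norm_add_eq_max_of_orthogonal]
  · rw [star_lie hh, neg_mul, orthogonal, neg_zero]
  · rw [star_lie hk, mul_neg, orthogonal, neg_zero]

section Order

variable [PartialOrder A] [StarOrderedRing A]

lemma exists_add_eq_and_mul_eq_smul {a : A} (ha : 0 ≤ a) {s : ℝ} (hs : 0 ≤ s) (hsa : s ≤ ‖a‖) :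
    ∃ h k : A, 0 ≤ h ∧ 0 ≤ k ∧ ‖h‖ ≤ s ∧ ‖k‖ ≤ ‖a‖ - s ∧ h + k = a ∧ h * k = s • k := by
  have spectrum_nonneg {t : ℝ} (ht : t ∈ quasispectrum ℝ a) : 0 ≤ t :=
    quasispectrum_nonneg_of_nonneg a ha t ht
  have spectrum_le {t : ℝ} (ht : t ∈ quasispectrum ℝ a) : t ≤ ‖a‖ :=
    (le_abs_self t).trans
      (NonUnitalIsometricContinuousFunctionalCalculus.norm_quasispectrum_le a ht)
  let lower (t : ℝ) : ℝ := min t s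
  let upper (t : ℝ) : ℝ := max (t - s) 0
  have lower_cont : Continuous lower := by fun_prop
  have upper_cont : Continuous upper := by fun_prop
  have lower_zero : lower 0 = 0 := min_eq_left hs
  have upper_zero : upper 0 = 0 := max_eq_right (by linarith)
  have lower_nonneg {t : ℝ} (ht : t ∈ quasispectrum ℝ a) : 0 ≤ lower t :=
    le_min (spectrum_nonneg ht) hs
  have upper_nonneg (t : ℝ) : 0 ≤ upper t := le_max_right _ _
  have lower_add_upper (t : ℝ) : lower t + upper t = t := by grind
  have lower_mul_upper (t : ℝ) : lower t * upper t = s • upper t := by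
    grind [smul_eq_mul]
  refine ⟨cfcₙ lower a, cfcₙ upper a, cfcₙ_nonneg fun t ↦ lower_nonneg,
    cfcₙ_nonneg fun t _ ↦ upper_nonneg t, norm_cfcₙ_le fun t ht ↦ ?_,
    norm_cfcₙ_le fun t ht ↦ ?_, ?_, ?_⟩
  · rw [Real.norm_of_nonneg (lower_nonneg ht)]
    exact min_le_right t s
  · rw [Real.norm_of_nonneg (upper_nonneg t)]
    exact max_le (sub_le_sub_right (spectrum_le ht) s) (sub_nonneg.mpr hsa)
  · rw [← cfcₙ_add lower upper a lower_cont.continuousOn lower_zero upper_cont.continuousOn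
      upper_zero]
    simp only [lower_add_upper, cfcₙ_id' ℝ a]
  · rw [← cfcₙ_mul lower upper a lower_cont.continuousOn lower_zero upper_cont.continuousOn
      upper_zero, ← cfcₙ_smul s upper a upper_cont.continuousOn upper_zero]
    simp only [lower_mul_upper]

lemma norm_lie_le_half_pow_mul (hred : ∀ x : A, x * x = 0 → x = 0) (n : ℕ) {a : A} (ha : 0 ≤ a)
    (y : A) : ‖⁅a, y⁆‖ ≤ (1 / 2) ^ n * (2 * ‖a‖ * ‖y‖) := by
  induction n generalizing a with
  | zero =>
    calc ‖⁅a, y⁆‖ ≤ ‖a * y‖ + ‖y * a‖ := norm_sub_le _ _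
      _ ≤ ‖a‖ * ‖y‖ + ‖y‖ * ‖a‖ := add_le_add (norm_mul_le _ _) (norm_mul_le _ _)
      _ = (1 / 2) ^ 0 * (2 * ‖a‖ * ‖y‖) := by ring
  | succ n ih =>
    obtain ⟨h, k, hh, hk, norm_h, norm_k, rfl, hhk⟩ :=
      exists_add_eq_and_mul_eq_smul ha (by positivity) (half_le_self (norm_nonneg a))
    rw [sub_half] at norm_k
    have of_half {x : A} (hx : 0 ≤ x) (norm_x : ‖x‖ ≤ ‖h + k‖ / 2) :
        ‖⁅x, y⁆‖ ≤ (1 / 2) ^ (n + 1) * (2 * ‖h + k‖ * ‖y‖) := calc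
      ‖⁅x, y⁆‖ ≤ (1 / 2) ^ n * (2 * ‖x‖ * ‖y‖) := ih hx
      _ ≤ (1 / 2) ^ n * (2 * (‖h + k‖ / 2) * ‖y‖) := by gcongr
      _ = (1 / 2) ^ (n + 1) * (2 * ‖h + k‖ * ‖y‖) := by ring
    rw [norm_add_lie_eq_max_of_mul_eq_smul hred (.of_nonneg hh) (.of_nonneg hk) hhk]
    exact max_le (of_half hh norm_h) (of_half hk norm_k)

lemma commute_of_nonneg_of_forall_mul_self_eq_zero (hred : ∀ x : A, x * x = 0 → x = 0) {a : A}
    (ha : 0 ≤ a) (y : A) : Commute a y := by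
  have hlim : Filter.Tendsto (fun n : ℕ ↦ (1 / 2 : ℝ) ^ n * (2 * ‖a‖ * ‖y‖)) Filter.atTop
      (nhds 0) := by
    simpa using (tendsto_pow_atTop_nhds_zero_of_lt_one (by norm_num)
      (by norm_num : (1 / 2 : ℝ) < 1)).mul_const (2 * ‖a‖ * ‖y‖)
  have hlie : ‖⁅a, y⁆‖ ≤ 0 := ge_of_tendsto' hlim fun n ↦ norm_lie_le_half_pow_mul hred n ha y
  exact sub_eq_zero.mp (norm_le_zero_iff.mp hlie)

end Order

theorem commute_of_forall_mul_self_eq_zero (hred : ∀ x : A, x * x = 0 → x = 0) (a b : A) :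
    Commute a b := by
  let _ : PartialOrder A := CStarAlgebra.spectralOrder A
  have : StarOrderedRing A := CStarAlgebra.spectralOrderedRing A
  have ha : a ∈ Submodule.span ℂ {p : A | 0 ≤ p} := by simp [CStarAlgebra.span_nonneg]
  induction ha using Submodule.span_induction with
  | mem p hp => exact commute_of_nonneg_of_forall_mul_self_eq_zero hred hp b
  | zero => exact Commute.zero_left b
  | add _ _ _ _ hx hy => exact hx.add_left hy
  | smul c _ _ hx => exact hx.smul_left c

variable [PartialOrder A] [StarOrderedRing A]

lemma mul_eq_zero_of_nonneg_of_le {a c f : A} (hc : 0 ≤ c) (hca : c ≤ a) (haf : a * f = 0) :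
    c * f = 0 := by
  have hfcf : star f * c * f = 0 := by
    refine le_antisymm ?_ (star_left_conjugate_nonneg hc f)
    simpa [mul_assoc, haf] using star_left_conjugate_le_conjugate hca f
  obtain ⟨d, rfl⟩ := CStarAlgebra.nonneg_iff_eq_star_mul_self.mp hc
  have hdf : d * f = 0 := by
    rw [← CStarRing.star_mul_self_eq_zero_iff, star_mul]
    simpa only [mul_assoc] using hfcf
  rw [mul_assoc, hdf, mul_zero]

lemma HasRieszDecomposition.mul_mul_eq_zero (hA : HasRieszDecomposition (selfAdjoint A))
    {a b c e f : A} (ha : 0 ≤ a) (hb : 0 ≤ b) (hc : 0 ≤ c) (hcab : c ≤ a + b)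
    (heb : e * b = 0) (haf : a * f = 0) : e * c * f = 0 := by
  obtain ⟨c₁, c₂, ⟨hc₁, hc₁a⟩, ⟨hc₂, hc₂b⟩, hadd⟩ :=
    @hA ⟨a, .of_nonneg ha⟩ ⟨b, .of_nonneg hb⟩ ⟨c, .of_nonneg hc⟩ ha hb hc hcab
  obtain rfl : (c₁ + c₂ : A) = c := congr(($hadd : A))
  have hc₁f : (c₁ : A) * f = 0 := mul_eq_zero_of_nonneg_of_le hc₁ hc₁a haf
  have hec₂ : e * (c₂ : A) = 0 := by
    have hbe : b * star e = 0 := by simpa [hb.star_eq] using congr(star $heb)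
    simpa [c₂.2.star_eq] using congr(star $(mul_eq_zero_of_nonneg_of_le hc₂ hc₂b hbe))
  rw [mul_add, hec₂, add_zero, mul_assoc, hc₁f, mul_zero]

lemma HasRieszDecomposition.eq_zero_of_mul_self_eq_zero
    (hA : HasRieszDecomposition (selfAdjoint A)) {x : A} (hx : x * x = 0) : x = 0 := by
  set p := star x * x with hp
  have hps : star p = p := (IsSelfAdjoint.star_mul_self x).star_eq
  have hpx : p * x = 0 := by rw [hp, mul_assoc, hx, mul_zero]
  have hle : (p + x) * star (p + x) ≤ 2 • (p * star p) + 2 • (x * star x) := by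
    rw [← sub_nonneg]
    convert mul_star_self_nonneg (p - x) using 1
    simp only [star_add, star_sub]
    noncomm_ring
  have hxcx : x * ((p + x) * star (p + x)) * x = 0 :=
    hA.mul_mul_eq_zero (nsmul_nonneg (mul_star_self_nonneg p) 2)
      (nsmul_nonneg (mul_star_self_nonneg x) 2) (mul_star_self_nonneg _) hle
      (by rw [mul_smul_comm, ← mul_assoc, hx, zero_mul, smul_zero])
      (by rw [smul_mul_assoc, hps, mul_assoc, hpx, mul_zero, smul_zero])
  have hxpp : x * p * p = 0 := by
    have hright : star (p + x) * x = p := by rw [star_add, add_mul, hps, hpx, zero_add]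
    have hleft : x * (p + x) = x * p := by rw [mul_add, hx, add_zero]
    rwa [← mul_assoc, hleft, mul_assoc, hright] at hxcx
  have hxp : x * p = 0 := by
    rw [← CStarRing.mul_star_self_eq_zero_iff, star_mul, hps, ← mul_assoc, hxpp, zero_mul]
  have hp0 : p = 0 := by
    rw [← CStarRing.star_mul_self_eq_zero_iff, hps, hp, mul_assoc, hxp, mul_zero]
  exact (CStarRing.star_mul_self_eq_zero_iff x).mp hp0

end CStarAlgebra

theorem commutative_of_selfAdjoint_lattice_general
    {A : Type*} [NonUnitalCStarAlgebra A] [PartialOrder A] [StarOrderedRing A]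
    (hA : HasRieszDecomposition (selfAdjoint A)) :
    ∀ a b : A, a * b = b * a :=
  commute_of_forall_mul_self_eq_zero fun _ ↦ hA.eq_zero_of_mul_self_eq_zero

/-- If the self-adjoint part of a C*-algebra `A`, endowed with its canonical order,
is a lattice (every pair of elements has a greatest lower bound), then `A` is commutative. -/
theorem commutative_of_selfAdjoint_lattice
    {A : Type*} [NonUnitalCStarAlgebra A] [PartialOrder A] [StarOrderedRing A]
    (hlat : ∀ a b : selfAdjoint A, ∃ c : selfAdjoint A, IsGLB ({a, b} : Set (selfAdjoint A)) c) :
    ∀ a b : A, a * b = b * a :=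
  commutative_of_selfAdjoint_lattice_general (hasRieszDecomposition_of_exists_isGLB hlat)
end
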